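/- Let γ = (1 + √5)/2 be the golden ratio, and set α = γ^{−3}, β = γ^{−2}. Then the Hausdorff dimension of C_α − (2/γ)·C_β is strictly less than 1, while the sum of the Hausdorff dimensions of C_α and C_β is strictly greater than 1; in particular, C_α − (2/γ)·C_β has Lebesgue measure zero. -/

import Mathlib

/-!
Put `α = γ⁻³` and `β = γ⁻²`, so that `α ^ 2 = β ^ 3 = γ⁻⁶`. Splitting off two digits in `C_α` and
three in `C_β` exhibits `D = C_α - (2 / γ) * C_β` as the attractor of 32 similarities of common
ratio `γ⁻⁶`. Because `1 - α = (2 / γ) * (1 - β) = 2 * γ⁻²`, the translations are, up to a common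
factor, elements of `ℤ[γ]`, and `γ ^ 2 = γ + 1` leaves only 21 different ones. Among the words of
length two there are further coincidences `γ ^ 6 * d + e = γ ^ 6 * (d + g) + (e - γ ^ 6 * g)`.
Whenever possible one carries to the larger first digit `d + g`; as there are finitely many digits
this terminates, so every point of `D` has an expansion without carrying pairs. A positive weight
vector shows that there are `O((52 / 3) ^ n)` words of length `n` without carrying pairs, and
`52 / 3 < γ ^ 6` then gives `dimH D < 1`.

Reading the digits of a point of `C_a` in base 2 is Hölder of exponent `log 2 / log (1 / a)` and
maps `C_a` onto `[0, 1]`, so `dimH C_a` is at least this exponent. For `α` and `β` the two exponents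
add up to `5 * log 2 / (6 * log γ)`, which exceeds one because `γ ^ 6 < 2 ^ 5`.
-/

open Set MeasureTheory

/-- The middle Cantor set `C_a`, for `0 < a < 1/2`:
`C_a = { (1-a) * ∑ εₖ aᵏ : εₖ ∈ {0,1} }`. -/
noncomputable def middleCantor (a : ℝ) : Set ℝ :=
  {x : ℝ | ∃ ε : ℕ → Bool, x = (1 - a) * ∑' k : ℕ, (if ε k then a ^ k else 0)}

/-- The arithmetic difference `C_a - l · C_b`. -/
noncomputable def diffSet (a b l : ℝ) : Set ℝ :=
  {z : ℝ | ∃ x ∈ middleCantor a, ∃ y ∈ middleCantor b, z = x - l * y}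

open Filter Metric Topology
open scoped ENNReal NNReal goldenRatio

theorem dimH_le_of_forall_exists_cover {X : Type*} [EMetricSpace X] {E : Set X}
    {s r c K M : ℝ≥0} (hr : r < 1) (hcr : c * r ^ (s : ℝ) ≤ 1)
    (h : ∀ n : ℕ, ∃ F : Finset (Set X), E ⊆ ⋃₀ ↑F ∧ (F.card : ℝ≥0) ≤ K * c ^ n ∧
      ∀ U ∈ F, ediam U ≤ (M * r ^ n : ℝ≥0)) :
    dimH E ≤ s := by
  borelize X
  choose F hEF hcard hdiam using h
  have hmesh : Tendsto (fun n : ℕ => ((M * r ^ n : ℝ≥0) : ℝ≥0∞)) atTop (𝓝 0) :=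
    ENNReal.tendsto_coe.2 <| by
      simpa using (NNReal.tendsto_pow_atTop_nhds_zero_of_lt_one hr).const_mul M
  have hbound (n : ℕ) : (F n).card * (M * r ^ n) ^ (s : ℝ) ≤ K * M ^ (s : ℝ) :=
    calc (F n).card * (M * r ^ n) ^ (s : ℝ)
        ≤ K * c ^ n * (M * r ^ n) ^ (s : ℝ) := by gcongr; exact hcard n
      _ = K * M ^ (s : ℝ) * (c * r ^ (s : ℝ)) ^ n := by
          rw [NNReal.mul_rpow, ← NNReal.rpow_natCast r, ← NNReal.rpow_mul, mul_comm (n : ℝ),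
            NNReal.rpow_mul, NNReal.rpow_natCast]
          ring
      _ ≤ K * M ^ (s : ℝ) := mul_le_of_le_one_right' (pow_le_one' hcr n)
  have hsum (n : ℕ) :
      ∑ U : F n, ediam U.1 ^ (s : ℝ) ≤ ((K * M ^ (s : ℝ) : ℝ≥0) : ℝ≥0∞) :=
    calc ∑ U : F n, ediam U.1 ^ (s : ℝ)
        ≤ ∑ _U : F n, ((M * r ^ n : ℝ≥0) : ℝ≥0∞) ^ (s : ℝ) := by
          gcongr with U; exact hdiam n U U.2
      _ = (((F n).card * (M * r ^ n) ^ (s : ℝ) : ℝ≥0) : ℝ≥0∞) := by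
          rw [Finset.sum_const, Finset.card_univ, Fintype.card_coe, nsmul_eq_mul,
            ← ENNReal.coe_rpow_of_nonneg _ s.coe_nonneg, ← ENNReal.coe_natCast, ← ENNReal.coe_mul]
      _ ≤ _ := ENNReal.coe_le_coe.2 (hbound n)
  have hmeasure : Measure.hausdorffMeasure s E ≤ ((K * M ^ (s : ℝ) : ℝ≥0) : ℝ≥0∞) :=
    (Measure.hausdorffMeasure_le_liminf_sum s E _ hmesh (fun n (U : F n) => U.1)
      (.of_forall fun n U => hdiam n U U.2)
      (.of_forall fun n => (hEF n).trans_eq sUnion_eq_iUnion)).trans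
      (liminf_le_of_frequently_le' (.of_forall hsum))
  exact dimH_le_of_hausdorffMeasure_ne_top (hmeasure.trans_lt ENNReal.coe_lt_top).ne

theorem exists_lt_mul_rpow_le_one {r c s : ℝ≥0} (hs : s ≠ 0) (h : c * r ^ (s : ℝ) < 1) :
    ∃ t < s, c * r ^ (t : ℝ) ≤ 1 := by
  have hs₀ : 0 < s := pos_iff_ne_zero.2 hs
  have hcont : ContinuousAt (fun t : ℝ≥0 => c * r ^ (t : ℝ)) s :=
    continuousAt_const.mul
      (tendsto_const_nhds.nnrpow NNReal.continuous_coe.continuousAt (.inr hs₀))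
  have : (𝓝[<] s).NeBot := nhdsLT_neBot_of_exists_lt ⟨0, hs₀⟩
  have hlt : ∀ᶠ t : ℝ≥0 in 𝓝[<] s, c * r ^ (t : ℝ) < 1 :=
    nhdsWithin_le_nhds (hcont.eventually_lt continuousAt_const h)
  obtain ⟨t, ht, hts⟩ := (hlt.and self_mem_nhdsWithin).exists
  exact ⟨t, hts, ht.le⟩

theorem dimH_range_le_of_edist_le {Ω X Y : Type*} [EMetricSpace X] [EMetricSpace Y] {g : Ω → X}
    {h : Ω → Y} {C s : ℝ≥0} (hs : 0 < s)
    (hgh : ∀ x y, edist (h x) (h y) ≤ C * edist (g x) (g y) ^ (s : ℝ)) :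
    dimH (range h) ≤ dimH (range g) / s := by
  cases isEmpty_or_nonempty Ω
  · simp [range_eq_empty]
  have hinv {p : X} (hp : p ∈ range g) : g (g.invFun p) = p := Function.invFun_eq hp
  have hholder : HolderOnWith C s (h ∘ g.invFun) (range g) := fun p hp q hq => by
    simpa only [Function.comp_apply, hinv hp, hinv hq] using hgh (g.invFun p) (g.invFun q)
  have hfactor (x : Ω) : h (g.invFun (g x)) = h x := by
    have := hgh (g.invFun (g x)) x
    rwa [hinv (mem_range_self x), edist_self, ENNReal.zero_rpow_of_pos (NNReal.coe_pos.2 hs),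
      mul_zero, nonpos_iff_eq_zero, edist_eq_zero] at this
  calc dimH (range h) ≤ dimH (h ∘ g.invFun '' range g) := dimH_mono <| by
        rintro _ ⟨x, rfl⟩
        exact ⟨g x, mem_range_self x, hfactor x⟩
    _ ≤ dimH (range g) / s := hholder.dimH_image_le hs

section Rewriting

variable {ι X : Type*} {f : ι → X → X} {R : ι → ι → Prop} {E : Set X}

/-- The points of `E` coded by the words of length `n + 1` over the maps `f` that start with the
letter `i` and have no two consecutive letters related by `R`. -/
def avoidingCylinder (f : ι → X → X) (R : ι → ι → Prop) (E : Set X) : ℕ → ι → Set X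
  | 0, i => f i '' E
  | n + 1, i => f i '' ⋃ (j) (_ : ¬R i j), avoidingCylinder f R E n j

theorem avoidingCylinder_subset_image (hf : ∀ i, MapsTo (f i) E E) (n : ℕ) (i : ι) :
    avoidingCylinder f R E n i ⊆ f i '' E := by
  cases n with
  | zero => exact Subset.rfl
  | succ n =>
    exact image_mono <| iUnion₂_subset fun j _ =>
      (avoidingCylinder_subset_image hf n j).trans (hf j).image_subset

theorem subset_iUnion_avoidingCylinder {ρ : ι → ι → Prop} (hρ : WellFounded ρ)
    (hf : ∀ i, MapsTo (f i) E E) (hE : E ⊆ ⋃ i, f i '' E)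
    (hR : ∀ i j, R i j → ∃ i' j', ρ i' i ∧ f i ∘ f j = f i' ∘ f j') (n : ℕ) :
    E ⊆ ⋃ i, avoidingCylinder f R E n i := by
  induction n with
  | zero => exact hE
  | succ n ih =>
    have himage (i : ι) : f i '' E ⊆ ⋃ i, avoidingCylinder f R E (n + 1) i := by
      induction i using hρ.induction with
      | _ i ihρ =>
        rintro _ ⟨x, hx, rfl⟩
        obtain ⟨j, hxj⟩ := mem_iUnion.1 (ih hx)
        by_cases hij : R i j
        · obtain ⟨i', j', hlt, hcomp⟩ := hR i j hij
          obtain ⟨y, hy, rfl⟩ := avoidingCylinder_subset_image hf n j hxj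
          exact ihρ i' hlt ⟨f j' y, hf j' hy, (congrFun hcomp y).symm⟩
        · exact mem_iUnion.2 ⟨i, x, mem_iUnion₂.2 ⟨j, hij, hxj⟩, rfl⟩
    exact hE.trans (iUnion_subset himage)

variable [Fintype ι] [DecidableRel R] {w : ι → ℝ≥0} {c r : ℝ≥0}

theorem exists_cover_avoidingCylinder [EMetricSpace X] (hf : ∀ i, LipschitzWith r (f i))
    (hw : ∀ i, 1 ≤ w i) (hc : ∀ i, ∑ j with ¬R i j, w j ≤ c * w i) (n : ℕ) (i : ι) :
    ∃ F : Finset (Set X), avoidingCylinder f R E n i ⊆ ⋃₀ ↑F ∧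
      (F.card : ℝ≥0) ≤ w i * c ^ n ∧ ∀ U ∈ F, ediam U ≤ r ^ (n + 1) * ediam E := by
  classical
  induction n generalizing i with
  | zero =>
    refine ⟨{f i '' E}, by simp [avoidingCylinder], by simpa using hw i, ?_⟩
    simpa using (hf i).ediam_image_le E
  | succ n ih =>
    choose F hF hcard hdiam using ih
    refine ⟨(Finset.univ.filter (¬R i ·)).biUnion fun j => (F j).image (f i '' ·), ?_, ?_, ?_⟩
    · rintro _ ⟨x, hx, rfl⟩
      obtain ⟨j, hij, hxj⟩ := mem_iUnion₂.1 hx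
      obtain ⟨U, hU, hxU⟩ := hF j hxj
      refine ⟨f i '' U, ?_, mem_image_of_mem _ hxU⟩
      simpa using ⟨j, hij, U, hU, rfl⟩
    · calc _ ≤ ∑ j with ¬R i j, ((F j).card : ℝ≥0) := by
            exact_mod_cast Finset.card_biUnion_le.trans
              (Finset.sum_le_sum fun j _ => Finset.card_image_le)
        _ ≤ ∑ j with ¬R i j, w j * c ^ n := Finset.sum_le_sum fun j _ => hcard j
        _ ≤ c * w i * c ^ n := by rw [← Finset.sum_mul]; gcongr; exact hc i
        _ = w i * c ^ (n + 1) := by ring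
    · simp only [Finset.mem_biUnion, Finset.mem_image, forall_exists_index, and_imp]
      rintro _ j - U hU rfl
      calc ediam (f i '' U) ≤ r * ediam U := (hf i).ediam_image_le U
        _ ≤ r * (r ^ (n + 1) * ediam E) := by gcongr; exact hdiam j U hU
        _ = r ^ (n + 1 + 1) * ediam E := by ring

theorem dimH_lt_of_rewriting [EMetricSpace X] {ρ : ι → ι → Prop} {s : ℝ≥0} (hρ : WellFounded ρ)
    (hf : ∀ i, LipschitzWith r (f i)) (hmaps : ∀ i, MapsTo (f i) E E) (hE : E ⊆ ⋃ i, f i '' E)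
    (hR : ∀ i j, R i j → ∃ i' j', ρ i' i ∧ f i ∘ f j = f i' ∘ f j')
    (hw : ∀ i, 1 ≤ w i) (hc : ∀ i, ∑ j with ¬R i j, w j ≤ c * w i)
    (hdiam : ediam E ≠ ∞) (hr : r < 1) (hs : s ≠ 0) (hcr : c * r ^ (s : ℝ) < 1) :
    dimH E < s := by
  classical
  obtain ⟨t, hts, ht⟩ := exists_lt_mul_rpow_le_one hs hcr
  refine (dimH_le_of_forall_exists_cover (K := ∑ i, w i) (M := r * (ediam E).toNNReal) hr ht
    fun n => ?_).trans_lt (ENNReal.coe_lt_coe.2 hts)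
  choose F hF hcard hdiamF using exists_cover_avoidingCylinder (E := E) hf hw hc n
  refine ⟨Finset.univ.biUnion F, fun x hx => ?_, ?_, fun U hU => ?_⟩
  · obtain ⟨i, hxi⟩ := mem_iUnion.1 (subset_iUnion_avoidingCylinder hρ hmaps hE hR n hx)
    obtain ⟨U, hU, hxU⟩ := hF i hxi
    exact ⟨U, by simpa using ⟨i, hU⟩, hxU⟩
  · calc _ ≤ ∑ i, ((F i).card : ℝ≥0) := by exact_mod_cast Finset.card_biUnion_le
      _ ≤ (∑ i, w i) * c ^ n := by rw [Finset.sum_mul]; gcongr with i; exact hcard i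
  · obtain ⟨i, -, hUi⟩ := Finset.mem_biUnion.1 hU
    refine (hdiamF i U hUi).trans_eq ?_
    rw [← ENNReal.coe_toNNReal hdiam]
    push_cast
    simp only [ENNReal.toNNReal_coe]
    ring

end Rewriting

section CantorCoding

variable {a b l : ℝ}

/-- The point `(1 - a) * ∑ εₖ aᵏ` of the middle Cantor set `C_a` with digit sequence `ε`. -/
noncomputable def cantorCoding (a : ℝ) (ε : ℕ → Bool) : ℝ :=
  (1 - a) * ∑' k, (ε k).toNat * a ^ k

theorem middleCantor_eq_range (a : ℝ) : middleCantor a = range (cantorCoding a) := by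
  have hterm (b : Bool) (k : ℕ) : (if b then a ^ k else 0) = b.toNat * a ^ k := by cases b <;> simp
  ext x
  simp only [middleCantor, cantorCoding, hterm, mem_ofPred_eq, mem_range, eq_comm (a := x)]

theorem summable_toNat_mul_pow (ha₀ : 0 ≤ a) (ha₁ : a < 1) (ε : ℕ → Bool) :
    Summable fun k => (ε k).toNat * a ^ k :=
  (summable_geometric_of_lt_one ha₀ ha₁).of_nonneg_of_le (fun k => by positivity) fun k =>
    mul_le_of_le_one_left (by positivity) (by exact_mod_cast (ε k).toNat_le)

theorem cantorCoding_eq_sum_add (ha₀ : 0 ≤ a) (ha₁ : a < 1) (ε : ℕ → Bool) (n : ℕ) :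
    cantorCoding a ε = (1 - a) * ∑ k : Fin n, (ε k).toNat * a ^ (k : ℕ) +
      a ^ n * cantorCoding a fun k => ε (k + n) := by
  have htail : ∑' k, (ε (k + n)).toNat * a ^ (k + n) = a ^ n * ∑' k, (ε (k + n)).toNat * a ^ k := by
    rw [← tsum_mul_left]
    exact tsum_congr fun k => by ring
  rw [cantorCoding, cantorCoding, ← (summable_toNat_mul_pow ha₀ ha₁ ε).sum_add_tsum_nat_add n,
    htail, ← Finset.sum_range fun k => (ε k).toNat * a ^ k]
  ring

theorem cantorCoding_mem_Icc (ha₀ : 0 ≤ a) (ha₁ : a < 1) (ε : ℕ → Bool) :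
    cantorCoding a ε ∈ Icc (0 : ℝ) 1 := by
  have ha : 0 < 1 - a := sub_pos.2 ha₁
  refine ⟨mul_nonneg ha.le (tsum_nonneg fun k => by positivity), ?_⟩
  calc cantorCoding a ε ≤ (1 - a) * ∑' k, a ^ k := by
        refine mul_le_mul_of_nonneg_left ((summable_toNat_mul_pow ha₀ ha₁ ε).tsum_le_tsum
          (fun k => ?_) (summable_geometric_of_lt_one ha₀ ha₁)) ha.le
        exact mul_le_of_le_one_left (by positivity) (by exact_mod_cast (ε k).toNat_le)
    _ = 1 := by rw [tsum_geometric_of_lt_one ha₀ ha₁, mul_inv_cancel₀ ha.ne']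

theorem mul_pow_le_abs_cantorCoding_sub (ha₀ : 0 ≤ a) (ha₁ : a < 1) {ε δ : ℕ → Bool} {n : ℕ}
    (hlt : ∀ k < n, ε k = δ k) (hne : ε n ≠ δ n) :
    (1 - 2 * a) * a ^ n ≤ |cantorCoding a ε - cantorCoding a δ| := by
  set x := cantorCoding a fun k => ε (k + (n + 1))
  set y := cantorCoding a fun k => δ (k + (n + 1))
  have hxy : |x - y| ≤ 1 := by
    have hx : x ∈ Icc (0 : ℝ) 1 := cantorCoding_mem_Icc ha₀ ha₁ _
    have hy : y ∈ Icc (0 : ℝ) 1 := cantorCoding_mem_Icc ha₀ ha₁ _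
    exact Real.dist_le_of_mem_Icc_01 hx hy
  have hdigit : |((ε n).toNat - (δ n).toNat : ℝ)| = 1 := by
    cases hε : ε n <;> cases hδ : δ n <;> simp_all
  have hsub : cantorCoding a ε - cantorCoding a δ =
      a ^ n * ((1 - a) * ((ε n).toNat - (δ n).toNat) + a * (x - y)) := by
    rw [cantorCoding_eq_sum_add ha₀ ha₁ ε (n + 1), cantorCoding_eq_sum_add ha₀ ha₁ δ (n + 1),
      Fin.sum_univ_castSucc, Fin.sum_univ_castSucc]
    simp only [Fin.val_castSucc, Fin.val_last, hlt _ (Fin.is_lt _)]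
    ring
  rw [hsub, abs_mul, abs_of_nonneg (pow_nonneg ha₀ n), mul_comm]
  gcongr
  calc 1 - 2 * a ≤ |(1 - a) * ((ε n).toNat - (δ n).toNat)| - |a * (x - y)| := by
        rw [abs_mul, abs_mul, hdigit, abs_of_pos (sub_pos.2 ha₁), abs_of_nonneg ha₀]
        nlinarith
    _ ≤ _ := by simpa only [sub_neg_eq_add, abs_neg] using abs_sub_abs_le_abs_sub _ (-(a * (x - y)))

theorem mem_middleCantor_iff_exists_prefix (ha₀ : 0 ≤ a) (ha₁ : a < 1) (n : ℕ) {x : ℝ} :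
    x ∈ middleCantor a ↔ ∃ e : Fin n → Bool, ∃ y ∈ middleCantor a,
      x = (1 - a) * ∑ k, (e k).toNat * a ^ (k : ℕ) + a ^ n * y := by
  rw [middleCantor_eq_range]
  constructor
  · rintro ⟨ε, rfl⟩
    exact ⟨fun k => ε k, _, mem_range_self _, cantorCoding_eq_sum_add ha₀ ha₁ ε n⟩
  · rintro ⟨e, _, ⟨δ, rfl⟩, rfl⟩
    refine ⟨fun k => if hk : k < n then e ⟨k, hk⟩ else δ (k - n), ?_⟩
    rw [cantorCoding_eq_sum_add ha₀ ha₁ _ n]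
    simp

theorem mem_diffSet_iff_exists_prefix (ha₀ : 0 ≤ a) (ha₁ : a < 1) (hb₀ : 0 ≤ b) (hb₁ : b < 1)
    {m n : ℕ} (hmn : a ^ m = b ^ n) {z : ℝ} :
    z ∈ diffSet a b l ↔ ∃ (e : Fin m → Bool) (f : Fin n → Bool), ∃ z' ∈ diffSet a b l,
      z = (1 - a) * ∑ k, (e k).toNat * a ^ (k : ℕ) -
        l * ((1 - b) * ∑ k, (f k).toNat * b ^ (k : ℕ)) + a ^ m * z' := by
  constructor
  · rintro ⟨x, hx, y, hy, rfl⟩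
    obtain ⟨e, x', hx', rfl⟩ := (mem_middleCantor_iff_exists_prefix ha₀ ha₁ m).1 hx
    obtain ⟨f, y', hy', rfl⟩ := (mem_middleCantor_iff_exists_prefix hb₀ hb₁ n).1 hy
    exact ⟨e, f, _, ⟨x', hx', y', hy', rfl⟩, by rw [← hmn]; ring⟩
  · rintro ⟨e, f, _, ⟨x, hx, y, hy, rfl⟩, rfl⟩
    exact ⟨_, (mem_middleCantor_iff_exists_prefix ha₀ ha₁ m).2 ⟨e, x, hx, rfl⟩,
      _, (mem_middleCantor_iff_exists_prefix hb₀ hb₁ n).2 ⟨f, y, hy, rfl⟩, by rw [← hmn]; ring⟩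

theorem middleCantor_subset_Icc (ha₀ : 0 ≤ a) (ha₁ : a < 1) : middleCantor a ⊆ Icc 0 1 := by
  rw [middleCantor_eq_range]
  exact range_subset_iff.2 (cantorCoding_mem_Icc ha₀ ha₁)

theorem isBounded_diffSet (ha₀ : 0 ≤ a) (ha₁ : a < 1) (hb₀ : 0 ≤ b) (hb₁ : b < 1) (l : ℝ) :
    Bornology.IsBounded (diffSet a b l) := by
  have hcont : Continuous fun p : ℝ × ℝ => p.1 - l * p.2 := by fun_prop
  have hIcc : IsCompact (Icc (0 : ℝ) 1) := isCompact_Icc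
  refine ((hIcc.prod hIcc).image hcont).isBounded.subset ?_
  rintro _ ⟨x, hx, y, hy, rfl⟩
  exact ⟨(x, y), ⟨middleCantor_subset_Icc ha₀ ha₁ hx, middleCantor_subset_Icc hb₀ hb₁ hy⟩, rfl⟩

/-- The real number in `[0, 1]` with binary expansion `ε`. -/
noncomputable def binaryCoding (ε : ℕ → Bool) : ℝ :=
  Real.ofDigits fun n => finTwoEquiv.symm (ε n)

theorem dimH_range_binaryCoding : dimH (range binaryCoding) = 1 := by
  have hIcc : Icc 0 1 ⊆ range binaryCoding := fun x hx => by
    obtain ⟨d, -, rfl⟩ := Real.ofDigits_SurjOn one_lt_two hx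
    exact ⟨fun n => finTwoEquiv (d n), by simp [binaryCoding]⟩
  have hinterior : (interior (range binaryCoding)).Nonempty := by
    refine .mono (interior_mono hIcc) ?_
    rw [interior_Icc]
    exact nonempty_Ioo.2 one_pos
  simpa using Real.dimH_of_nonempty_interior hinterior

theorem abs_binaryCoding_sub_le {s : ℝ} (ha₀ : 0 < a) (ha₂ : a < 1 / 2) (hs : 0 ≤ s)
    (has : 1 / 2 ≤ a ^ s) (ε δ : ℕ → Bool) :
    |binaryCoding ε - binaryCoding δ| ≤
      ((1 - 2 * a)⁻¹) ^ s * |cantorCoding a ε - cantorCoding a δ| ^ s := by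
  have hgap : 0 < 1 - 2 * a := by linarith
  obtain rfl | hne := eq_or_ne ε δ
  · rw [sub_self, abs_zero]
    positivity
  set n := PiNat.firstDiff ε δ
  have hlt (k : ℕ) (hk : k < n) : ε k = δ k := PiNat.apply_eq_of_lt_firstDiff hk
  have hdist : a ^ n ≤ (1 - 2 * a)⁻¹ * |cantorCoding a ε - cantorCoding a δ| :=
    (le_inv_mul_iff₀ hgap).2 <| mul_pow_le_abs_cantorCoding_sub ha₀.le (by linarith) hlt
      (PiNat.apply_firstDiff_ne hne)
  calc |binaryCoding ε - binaryCoding δ| ≤ ((2 : ℕ) ^ n : ℝ)⁻¹ :=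
        Real.abs_ofDigits_sub_ofDigits_le fun k hk => by rw [hlt k hk]
    _ = (1 / 2) ^ n := by simp
    _ ≤ (a ^ s) ^ n := by gcongr
    _ = (a ^ n) ^ s := Real.rpow_pow_comm ha₀.le s n
    _ ≤ ((1 - 2 * a)⁻¹ * |cantorCoding a ε - cantorCoding a δ|) ^ s := by gcongr
    _ = _ := Real.mul_rpow (by positivity) (abs_nonneg _)

theorem log_two_div_le_dimH_middleCantor (ha₀ : 0 < a) (ha₂ : a < 1 / 2) :
    ENNReal.ofReal (Real.log 2 / -Real.log a) ≤ dimH (middleCantor a) := by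
  have hlog : Real.log a < 0 := Real.log_neg ha₀ (by linarith)
  have hgap : 0 < 1 - 2 * a := by linarith
  set s : ℝ≥0 := (Real.log 2 / -Real.log a).toNNReal
  have hexp : 0 < Real.log 2 / -Real.log a := div_pos (Real.log_pos one_lt_two) (neg_pos.2 hlog)
  have hs : (s : ℝ) = Real.log 2 / -Real.log a := Real.coe_toNNReal _ hexp.le
  have has : a ^ (s : ℝ) = 1 / 2 := by
    rw [hs, Real.rpow_def_of_pos ha₀, div_neg, mul_neg, mul_div_cancel₀ _ hlog.ne, Real.exp_neg,
      Real.exp_log two_pos, one_div]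
  have hholder (ε δ : ℕ → Bool) : edist (binaryCoding ε) (binaryCoding δ) ≤
      (((1 - 2 * a)⁻¹ ^ (s : ℝ)).toNNReal : ℝ≥0∞) *
        edist (cantorCoding a ε) (cantorCoding a δ) ^ (s : ℝ) := by
    rw [edist_dist, edist_dist, ENNReal.ofReal_rpow_of_nonneg dist_nonneg s.coe_nonneg,
      ← ENNReal.ofReal, ← ENNReal.ofReal_mul (by positivity)]
    exact ENNReal.ofReal_le_ofReal
      (abs_binaryCoding_sub_le ha₀ ha₂ s.coe_nonneg has.ge ε δ)
  have hs₀ : 0 < s := Real.toNNReal_pos.2 hexp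
  have hdim : 1 ≤ dimH (middleCantor a) / s := by
    rw [← dimH_range_binaryCoding, middleCantor_eq_range]
    exact dimH_range_le_of_edist_le hs₀ hholder
  rwa [ENNReal.le_div_iff_mul_le (.inl (ENNReal.coe_ne_zero.2 hs₀.ne')) (.inl ENNReal.coe_ne_top),
    one_mul] at hdim

end CantorCoding

section GoldenDigits

open QuadraticAlgebra

/-- The ring `ℤ[γ]` of golden integers, with `ω` in the role of the golden ratio `γ`. -/
abbrev GoldenInt : Type := QuadraticAlgebra ℤ 1 1

/-- The embedding of `ℤ[γ]` into `ℝ` sending `ω` to the golden ratio. -/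
noncomputable def goldenEmbedding : GoldenInt →+* ℝ :=
  (lift ⟨φ, by simp [← sq, Real.goldenRatio_sq, add_comm]⟩ : GoldenInt →ₐ[ℤ] ℝ)

theorem goldenEmbedding_omega : goldenEmbedding ω = φ := by
  simp [goldenEmbedding]

/-- The golden integer read off from the first two digits `e` of a point of `C_α` and the first
three digits `f` of a point of `C_β`, for `α = γ⁻³` and `β = γ⁻²`, so that `α ^ 2 = β ^ 3 = γ⁻⁶`. -/
def goldenDigit (e : Fin 2 → Bool) (f : Fin 3 → Bool) : GoldenInt :=
  ∑ k, (e k).toNat * (ω : GoldenInt) ^ (6 - 3 * k.val) -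
    ∑ k, (f k).toNat * (ω : GoldenInt) ^ (6 - 2 * k.val)

/-- The digits in the base `γ⁶` expansion of the points of `C_α - (2 / γ) * C_β`. Relations in
`ℤ[γ]` leave only 21 values for the 32 choices of binary digits. -/
def goldenDigits : Finset GoldenInt :=
  Finset.univ.image fun p : (Fin 2 → Bool) × (Fin 3 → Bool) => goldenDigit p.1 p.2

/-- The two-digit word `d e` has the same value `ω ^ 6 * d + e` as a word `d' e'` whose first digit
is larger by `ω` or by `ω ^ 2`. -/
abbrev Carries (d e : GoldenInt) : Prop :=
  ∃ g ∈ ({ω, ω ^ 2} : Finset GoldenInt), d + g ∈ goldenDigits ∧ e - ω ^ 6 * g ∈ goldenDigits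

/-- An approximate Perron eigenvector of the matrix of those two-digit words that do not carry.
It depends only on the gap above the digit, which is `ω`, `ω ^ 2` or larger. -/
def digitWeight (d : GoldenInt) : ℕ :=
  if d + ω ∈ goldenDigits then 4 else if d + ω ^ 2 ∈ goldenDigits then 6 else 7

theorem one_le_digitWeight (d : GoldenInt) : 1 ≤ digitWeight d := by
  unfold digitWeight
  split_ifs <;> norm_num

theorem sum_digitWeight_le : ∀ d : goldenDigits,
    3 * ∑ e : goldenDigits with ¬Carries d e.1, digitWeight e ≤ 52 * digitWeight d := by
  decide +kernel

/-- The similarity prepending the base `γ⁶` digit `d` to a point of `C_α - (2 / γ) * C_β`. The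
factor `2 * γ⁻⁸` is the common value `2 * γ⁻²` of `1 - α` and `(2 / γ) * (1 - β)`, divided by the
factor `γ⁶` that makes the digits integral. -/
noncomputable def prependDigit (d : GoldenInt) (z : ℝ) : ℝ :=
  2 * φ⁻¹ ^ 8 * goldenEmbedding d + φ⁻¹ ^ 6 * z

theorem lipschitzWith_prependDigit (d : GoldenInt) :
    LipschitzWith (φ⁻¹ ^ 6).toNNReal (prependDigit d) := by
  refine LipschitzWith.of_dist_le_mul fun x y => le_of_eq ?_
  rw [prependDigit, prependDigit, dist_add_left, Real.dist_eq, Real.dist_eq, ← mul_sub, abs_mul,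
    Real.coe_toNNReal _ (by positivity), abs_of_nonneg (by positivity)]

theorem prependDigit_comp_eq (d e g : GoldenInt) :
    prependDigit d ∘ prependDigit e = prependDigit (d + g) ∘ prependDigit (e - ω ^ 6 * g) := by
  have hφ : φ⁻¹ ^ 6 * φ ^ 6 = 1 := by
    rw [← mul_pow, inv_mul_cancel₀ Real.goldenRatio_ne_zero, one_pow]
  ext z
  simp only [Function.comp_apply, prependDigit, map_add, map_sub, map_mul, map_pow,
    goldenEmbedding_omega]
  linear_combination 2 * φ⁻¹ ^ 8 * goldenEmbedding g * hφ

theorem exists_lt_of_carries {d e : GoldenInt} (h : Carries d e) :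
    ∃ d' ∈ goldenDigits, ∃ e' ∈ goldenDigits, goldenEmbedding d < goldenEmbedding d' ∧
      prependDigit d ∘ prependDigit e = prependDigit d' ∘ prependDigit e' := by
  obtain ⟨g, hg, hd, he⟩ := h
  refine ⟨_, hd, _, he, ?_, prependDigit_comp_eq d e g⟩
  have hg₀ : 0 < goldenEmbedding g := by
    obtain rfl | rfl : g = ω ∨ g = ω ^ 2 := by simpa using hg
    all_goals simp only [map_pow, goldenEmbedding_omega]; positivity
  simpa using hg₀

theorem inv_goldenRatio_sq : φ⁻¹ ^ 2 = 1 - φ⁻¹ := by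
  rw [Real.inv_goldenRatio, neg_sq, Real.goldenConj_sq, sub_neg_eq_add, add_comm]

theorem inv_pow_mul_goldenEmbedding_goldenDigit (e : Fin 2 → Bool) (f : Fin 3 → Bool) :
    φ⁻¹ ^ 6 * goldenEmbedding (goldenDigit e f) =
      ∑ k, (e k).toNat * (φ⁻¹ ^ 3) ^ (k : ℕ) - ∑ k, (f k).toNat * (φ⁻¹ ^ 2) ^ (k : ℕ) := by
  have hcancel (x : ℕ) {j : ℕ} (hj : j ≤ 6) : φ⁻¹ ^ 6 * (x * φ ^ (6 - j)) = x * φ⁻¹ ^ j := by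
    rw [pow_sub₀ _ Real.goldenRatio_ne_zero hj, inv_pow, inv_pow]
    field_simp
  simp only [goldenDigit, map_sub, map_sum, map_mul, map_pow, map_natCast, goldenEmbedding_omega,
    mul_sub, Finset.mul_sum, ← pow_mul]
  congr 1 <;> exact Finset.sum_congr rfl fun k _ => hcancel _ (by lia)

/-- The set `C_α - (2 / γ) * C_β`, with its parameters written as multiples of powers of `γ⁻¹`. -/
noncomputable abbrev goldenDiffSet : Set ℝ :=
  diffSet (φ⁻¹ ^ 3) (φ⁻¹ ^ 2) (2 * φ⁻¹)

theorem mem_goldenDiffSet_iff {z : ℝ} :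
    z ∈ goldenDiffSet ↔ ∃ d ∈ goldenDigits, ∃ z' ∈ goldenDiffSet, prependDigit d z' = z := by
  have hφ₁ : φ⁻¹ < 1 := inv_lt_one_of_one_lt₀ Real.one_lt_goldenRatio
  have hα : 1 - φ⁻¹ ^ 3 = 2 * φ⁻¹ ^ 2 := by linear_combination (-φ⁻¹ - 1) * inv_goldenRatio_sq
  have hβ : 2 * φ⁻¹ * (1 - φ⁻¹ ^ 2) = 2 * φ⁻¹ ^ 2 := by
    linear_combination (-2 * φ⁻¹) * inv_goldenRatio_sq
  rw [mem_diffSet_iff_exists_prefix (m := 2) (n := 3) (by positivity)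
    (pow_lt_one₀ (by positivity) hφ₁ three_ne_zero) (by positivity)
    (pow_lt_one₀ (by positivity) hφ₁ two_ne_zero) (by ring)]
  have hmap (e : Fin 2 → Bool) (f : Fin 3 → Bool) (z' : ℝ) :
      (1 - φ⁻¹ ^ 3) * ∑ k, (e k).toNat * (φ⁻¹ ^ 3) ^ (k : ℕ) -
        2 * φ⁻¹ * ((1 - φ⁻¹ ^ 2) * ∑ k, (f k).toNat * (φ⁻¹ ^ 2) ^ (k : ℕ)) +
          (φ⁻¹ ^ 3) ^ 2 * z' = prependDigit (goldenDigit e f) z' := by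
    rw [prependDigit]
    linear_combination hα * ∑ k, (e k).toNat * (φ⁻¹ ^ 3) ^ (k : ℕ) -
      hβ * ∑ k, (f k).toNat * (φ⁻¹ ^ 2) ^ (k : ℕ) -
      2 * φ⁻¹ ^ 2 * inv_pow_mul_goldenEmbedding_goldenDigit e f
  simp only [hmap, goldenDigits, Finset.exists_mem_image, Finset.mem_univ, true_and, Prod.exists,
    eq_comm (a := z)]

theorem goldenRatio_pow_six : φ ^ 6 = 8 * φ + 5 := by
  simpa [Nat.fib_add_two, mul_comm] using (Real.goldenRatio_mul_fib_succ_add_fib 5).symm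

theorem goldenRatio_pow_six_lt : φ ^ 6 < 2 ^ 5 := by
  linarith [goldenRatio_pow_six, Real.goldenRatio_lt_two]

theorem lt_goldenRatio_pow_six : 52 / 3 < φ ^ 6 := by
  have hφ : 37 / 24 < φ := by nlinarith [Real.goldenRatio_sq, Real.goldenRatio_pos]
  linarith [goldenRatio_pow_six]

theorem dimH_goldenDiffSet_lt_one : dimH goldenDiffSet < 1 := by
  have hφ₁ : φ⁻¹ < 1 := inv_lt_one_of_one_lt₀ Real.one_lt_goldenRatio
  have hφ₆ : 0 < φ ^ 6 := by positivity
  have hwf : WellFounded (Order.Preimage (fun d : goldenDigits => goldenEmbedding d) (· > ·)) :=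
    Finite.wellFounded_of_trans_of_irrefl _
  have hweight (d : goldenDigits) : ∑ e : goldenDigits with ¬Carries d.1 e.1,
      (digitWeight e : ℝ≥0) ≤ 52 / 3 * digitWeight d := by
    rw [div_mul_eq_mul_div, le_div_iff₀' (by norm_num)]
    exact_mod_cast sum_digitWeight_le d
  have hrate : (52 / 3 : ℝ≥0) * (φ⁻¹ ^ 6).toNNReal ^ ((1 : ℝ≥0) : ℝ) < 1 := by
    rw [NNReal.coe_one, NNReal.rpow_one, ← NNReal.coe_lt_coe]
    push_cast
    rw [Real.coe_toNNReal _ (by positivity), inv_pow, ← div_eq_mul_inv, div_lt_one hφ₆]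
    exact lt_goldenRatio_pow_six
  refine dimH_lt_of_rewriting (s := 1) hwf (fun d => lipschitzWith_prependDigit d)
    (fun d z hz => mem_goldenDiffSet_iff.2 ⟨d, d.2, z, hz, rfl⟩) (fun z hz => ?_)
    (fun d e hde => ?_) (fun d => mod_cast one_le_digitWeight d) hweight
    (isBounded_diffSet (by positivity) (pow_lt_one₀ (by positivity) hφ₁ three_ne_zero)
      (by positivity) (pow_lt_one₀ (by positivity) hφ₁ two_ne_zero) _).ediam_ne_top
    (by simpa using pow_lt_one₀ (by positivity) hφ₁ (by norm_num)) one_ne_zero hrate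
  · obtain ⟨d, hd, z', hz', rfl⟩ := mem_goldenDiffSet_iff.1 hz
    exact mem_iUnion.2 ⟨⟨d, hd⟩, mem_image_of_mem _ hz'⟩
  · obtain ⟨d', hd', e', he', hlt, heq⟩ := exists_lt_of_carries hde
    exact ⟨⟨d', hd'⟩, ⟨e', he'⟩, hlt, heq⟩

theorem one_lt_dimH_middleCantor_add_dimH_middleCantor :
    1 < dimH (middleCantor (φ⁻¹ ^ 3)) + dimH (middleCantor (φ⁻¹ ^ 2)) := by
  have hlog₀ : 0 < Real.log φ := Real.log_pos Real.one_lt_goldenRatio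
  have hlog : 6 * Real.log φ < 5 * Real.log 2 := by
    simpa using Real.log_lt_log (by positivity) goldenRatio_pow_six_lt
  have hinv : 1 / 2 < φ⁻¹ := by
    simpa using inv_strictAnti₀ Real.goldenRatio_pos Real.goldenRatio_lt_two
  have hβ : φ⁻¹ ^ 2 < 1 / 2 := by linarith [inv_goldenRatio_sq]
  have hα : φ⁻¹ ^ 3 < 1 / 2 := (pow_lt_pow_right_of_lt_one₀ (by positivity)
    (inv_lt_one_of_one_lt₀ Real.one_lt_goldenRatio) (by norm_num)).trans hβ
  refine lt_of_lt_of_le ?_ (add_le_add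
    (log_two_div_le_dimH_middleCantor (by positivity) hα)
    (log_two_div_le_dimH_middleCantor (by positivity) hβ))
  simp only [inv_pow, Real.log_inv, Real.log_pow, neg_neg]
  rw [← ENNReal.ofReal_add (by positivity) (by positivity), ENNReal.one_lt_ofReal]
  calc (1 : ℝ) < 5 * Real.log 2 / (6 * Real.log φ) := (one_lt_div (by positivity)).2 hlog
    _ = _ := by push_cast; field_simp; norm_num

end GoldenDigits

theorem stmt18 (γ : ℝ) (hγ : γ = (1 + Real.sqrt 5) / 2) :
    dimH (diffSet (γ ^ (-3 : ℤ)) (γ ^ (-2 : ℤ)) (2 / γ)) < 1 ∧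
    1 < dimH (middleCantor (γ ^ (-3 : ℤ))) + dimH (middleCantor (γ ^ (-2 : ℤ))) ∧
    volume (diffSet (γ ^ (-3 : ℤ)) (γ ^ (-2 : ℤ)) (2 / γ)) = 0 := by
  obtain rfl : γ = φ := hγ
  have hα : φ ^ (-3 : ℤ) = φ⁻¹ ^ 3 := by rw [zpow_neg, inv_pow]; norm_cast
  have hβ : φ ^ (-2 : ℤ) = φ⁻¹ ^ 2 := by rw [zpow_neg, inv_pow]; norm_cast
  rw [hα, hβ, div_eq_mul_inv]
  refine ⟨dimH_goldenDiffSet_lt_one, one_lt_dimH_middleCantor_add_dimH_middleCantor, ?_⟩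
  rw [← hausdorffMeasure_real]
  exact_mod_cast hausdorffMeasure_of_dimH_lt (d := 1) (by exact_mod_cast dimH_goldenDiffSet_lt_one)
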